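/- (Nonlocal C¹ implicit function theorem) Let F ∈ C(T×D_X×D_Y, Z) have continuous partial Fréchet derivatives in x and y on T×D_X×D_Y. Suppose there exist open M_X ⊆ D_X and M_Y ⊆ D_Y such that for each (t,x) ∈ T×M_X there is a unique y ∈ M_Y with F(t,x,y)=0, and at each solution point (t',x',y') the derivative ∂_y F(t',x',y') ∈ L(Y,Z) has a bounded inverse. Then F(t,x,y)=0 has a unique solution y = η(t,x) for each (t,x) ∈ T×M_X, and η ∈ C(T×M_X, M_Y) is continuously differentiable with respect to x. -/

import Mathlib

open Filter Topology

/-!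
Freeze the derivative `∂_y F` at a solution point. Uniformly in the parameters `(t, x)` near that
point, `F(t, x, ·)` is a small Lipschitz perturbation of this invertible linear map, hence covers a
ball around `F(t, x, y₀)` of a fixed radius. As `F(t, x, y₀)` is close to `0`, this produces a zero
of `F(t, x, ·)` as close to `y₀` as desired, and global uniqueness identifies it with `η(t, x)`:
this is the continuity of `η`. Differentiability then needs no further inversion theorem: expanding
`F(t, x', η(t, x')) = 0` to first order expresses `η(t, x') - η(t, x)` through `x' - x` up to an
error that is absorbed into the left-hand side.
-/

open Asymptotics Set
open scoped NNReal

section Parametric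

variable {𝕜 P Y Z : Type*} [NontriviallyNormedField 𝕜]
  [NormedAddCommGroup Y] [NormedSpace 𝕜 Y] [NormedAddCommGroup Z] [NormedSpace 𝕜 Z]
  {l : Filter P} {g : P → Y → Z} {g' : P → Y → Y →L[𝕜] Z} {A : Y →L[𝕜] Z} {b : Y} {z : Z}

theorem nonlinearRightInverse_nnnorm_pos [Nontrivial Z] (R : A.NonlinearRightInverse) :
    0 < R.nnnorm := by
  obtain ⟨z, hz⟩ := exists_ne (0 : Z)
  have hRz : R z ≠ 0 := fun h => hz (by rw [← R.right_inv z, h, map_zero])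
  have hbound : 0 < (R.nnnorm : ℝ) * ‖z‖ := (norm_pos_iff.2 hRz).trans_le (R.bound z)
  exact_mod_cast pos_of_mul_pos_left hbound (norm_nonneg z)

theorem exists_nhds_eventually_approximatesLinearOn [IsRCLikeNormedField 𝕜]
    (hg : ∀ᶠ q in l ×ˢ 𝓝 b, HasFDerivAt (g q.1) (g' q.1 q.2) q.2)
    (hg' : Tendsto ↿g' (l ×ˢ 𝓝 b) (𝓝 A)) {c : ℝ≥0} (hc : 0 < c) :
    ∃ U ∈ 𝓝 b, ∀ᶠ p in l, ApproximatesLinearOn (g p) A U c := by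
  let : RCLike 𝕜 := IsRCLikeNormedField.rclike 𝕜
  let : NormedSpace ℝ Y := .restrictScalars ℝ 𝕜 Y
  have hclose : ∀ᶠ q in l ×ˢ 𝓝 b, ‖g' q.1 q.2 - A‖ ≤ c := by
    filter_upwards [hg'.eventually (Metric.closedBall_mem_nhds A (NNReal.coe_pos.2 hc))] with q hq
    exact mem_closedBall_iff_norm.1 hq
  obtain ⟨p₁, hp₁, p₂, hp₂, hgood⟩ := eventually_prod_iff.1 (hg.and hclose)
  obtain ⟨r, hr, hball⟩ := Metric.nhds_basis_ball.mem_iff.1 hp₂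
  refine ⟨Metric.ball b r, Metric.ball_mem_nhds b hr, hp₁.mono fun p hp y₁ hy₁ y₂ hy₂ => ?_⟩
  exact (convex_ball b r).norm_image_sub_le_of_norm_hasFDerivWithin_le'
    (fun y hy => (hgood hp (hball hy)).1.hasFDerivWithinAt)
    (fun y hy => (hgood hp (hball hy)).2) hy₂ hy₁

theorem eventually_exists_mem_apply_eq [IsRCLikeNormedField 𝕜] [CompleteSpace Y]
    (hg : ∀ᶠ q in l ×ˢ 𝓝 b, HasFDerivAt (g q.1) (g' q.1 q.2) q.2)
    (hg' : Tendsto ↿g' (l ×ˢ 𝓝 b) (𝓝 A)) (R : A.NonlinearRightInverse)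
    (hb : Tendsto (g · b) l (𝓝 z)) {N : Set Y} (hN : N ∈ 𝓝 b) :
    ∀ᶠ p in l, ∃ y ∈ N, g p y = z := by
  cases subsingleton_or_nontrivial Z
  · exact .of_forall fun p => ⟨b, mem_of_mem_nhds hN, Subsingleton.elim _ _⟩
  have hR : 0 < R.nnnorm⁻¹ := inv_pos.2 (nonlinearRightInverse_nnnorm_pos R)
  obtain ⟨c, hc, hcR⟩ := exists_between hR
  obtain ⟨U, hU, happrox⟩ := exists_nhds_eventually_approximatesLinearOn hg hg' hc
  obtain ⟨r, hr, hrUN⟩ := Metric.nhds_basis_closedBall.mem_iff.1 (inter_mem hU hN)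
  have hradius : 0 < ((R.nnnorm : ℝ)⁻¹ - c) * r :=
    mul_pos (sub_pos.2 (by exact_mod_cast hcR)) hr
  filter_upwards [happrox, hb.eventually (Metric.closedBall_mem_nhds z hradius)] with p hp hpz
  obtain ⟨y, hy, hyz⟩ := hp.surjOn_closedBall_of_nonlinearRightInverse R hr.le
    (hrUN.trans inter_subset_left) (Metric.mem_closedBall_comm.1 hpz)
  exact ⟨y, (hrUN hy).2, hyz⟩

theorem tendsto_of_eventually_unique_apply_eq [IsRCLikeNormedField 𝕜] [CompleteSpace Y]
    (hg : ∀ᶠ q in l ×ˢ 𝓝 b, HasFDerivAt (g q.1) (g' q.1 q.2) q.2)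
    (hg' : Tendsto ↿g' (l ×ˢ 𝓝 b) (𝓝 A)) (R : A.NonlinearRightInverse)
    (hb : Tendsto (g · b) l (𝓝 z)) {V : Set Y} (hV : V ∈ 𝓝 b) {η : P → Y}
    (hη : ∀ᶠ p in l, ∀ y ∈ V, g p y = z → y = η p) :
    Tendsto η l (𝓝 b) := by
  refine tendsto_def.2 fun N hN => ?_
  filter_upwards [eventually_exists_mem_apply_eq hg hg' R hb (inter_mem hN hV), hη]
    with p ⟨y, ⟨hyN, hyV⟩, hyz⟩ hunique
  exact mem_preimage.2 (hunique y hyV hyz ▸ hyN)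

theorem continuousOn_of_unique_apply_eq [IsRCLikeNormedField 𝕜] [CompleteSpace Y]
    [TopologicalSpace P] {S : Set P} {V : Set Y} (hV : IsOpen V)
    (hgc : ∀ y ∈ V, ContinuousOn (g · y) S)
    (hg : ∀ p ∈ S, ∀ y ∈ V, HasFDerivAt (g p) (g' p y) y) (hg' : ContinuousOn ↿g' (S ×ˢ V))
    {η : P → Y} (hη : ∀ p ∈ S, η p ∈ V ∧ g p (η p) = z)
    (hunique : ∀ p ∈ S, ∀ y ∈ V, g p y = z → y = η p)
    (hinv : ∀ p ∈ S, (g' p (η p)).IsInvertible) :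
    ContinuousOn η S := by
  intro p₀ hp₀
  obtain ⟨hmem, hroot⟩ := hη p₀ hp₀
  obtain ⟨e, he⟩ := hinv p₀ hp₀
  have hVnhds : V ∈ 𝓝 (η p₀) := hV.mem_nhds hmem
  have hfilter : 𝓝[S ×ˢ V] (p₀, η p₀) = 𝓝[S] p₀ ×ˢ 𝓝 (η p₀) := by
    rw [nhdsWithin_prod_eq, hV.nhdsWithin_eq hmem]
  refine tendsto_of_eventually_unique_apply_eq (g' := g') (A := (e : Y →L[𝕜] Z)) ?_ ?_
    e.toNonlinearRightInverse (hroot ▸ hgc _ hmem p₀ hp₀) hVnhds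
    (eventually_nhdsWithin_of_forall hunique)
  · filter_upwards [prod_mem_prod self_mem_nhdsWithin hVnhds] with q hq using hg _ hq.1 _ hq.2
  · rw [he, ← hfilter]
    exact hg' _ ⟨hp₀, hmem⟩

theorem continuousOn_inverse_of_isInvertible [CompleteSpace Y] [TopologicalSpace P] {S : Set P}
    {L : P → Y →L[𝕜] Z} (hL : ContinuousOn L S) (hinv : ∀ p ∈ S, (L p).IsInvertible) :
    ContinuousOn (fun p => (L p).inverse) S := fun p hp =>
  ((hinv p hp).contDiffAt_map_inverse (n := 0)).continuousAt.comp_continuousWithinAt (hL p hp)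

end Parametric

section ImplicitDerivative

variable {𝕜 X Y Z : Type*} [NontriviallyNormedField 𝕜]
  [NormedAddCommGroup X] [NormedSpace 𝕜 X] [NormedAddCommGroup Y] [NormedSpace 𝕜 Y]
  [NormedAddCommGroup Z] [NormedSpace 𝕜 Z] {η : X → Y}

theorem hasFDerivAt_of_eventually_apply_graph_eq {f : X × Y → Z} {A : X →L[𝕜] Z} {B : Y →L[𝕜] Z}
    {x : X} (hf : HasFDerivAt f (A.coprod B) (x, η x)) (hB : B.IsInvertible)
    (hη : ContinuousAt η x) (hroot : ∀ᶠ x' in 𝓝 x, f (x', η x') = f (x, η x)) :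
    HasFDerivAt η (-B.inverse ∘L A) x := by
  obtain ⟨e, rfl⟩ := hB
  rw [ContinuousLinearMap.inverse_equiv]
  let K : X →L[𝕜] Y := -(e.symm : Z →L[𝕜] Y) ∘L A
  let γ : X → X × Y := fun x' => (x', η x') - (x, η x)
  let ρ : X → Y := fun x' => η x' - η x - K (x' - x)
  have hgraph : Tendsto (fun x' => (x', η x')) (𝓝 x) (𝓝 (x, η x)) := continuousAt_id.prodMk hη
  have hexpand : (fun x' => A.coprod (e : Y →L[𝕜] Z) (γ x')) =o[𝓝 x] γ := by
    refine (hf.isLittleO.comp_tendsto hgraph).neg_left.congr' ?_ .rfl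
    filter_upwards [hroot] with x' hx'
    simp [γ, hx']
  have hρ_eq : ρ = fun x' => e.symm (A.coprod (e : Y →L[𝕜] Z) (γ x')) := by
    ext x'
    simp only [ρ, γ, K, Prod.mk_sub_mk, ContinuousLinearMap.coprod_apply, map_add,
      ContinuousLinearMap.comp_apply, neg_apply, ContinuousLinearEquiv.coe_coe,
      e.symm_apply_apply]
    abel
  have hργ : ρ =o[𝓝 x] γ := by
    rw [hρ_eq]
    exact ((e.symm : Z →L[𝕜] Y).isBigO_comp _ _).trans_isLittleO hexpand
  -- `γ` differs from its tangential part `(x' - x, K (x' - x))` by `(0, ρ) = o(γ)`.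
  have hγ : γ =O[𝓝 x] fun x' => x' - x := by
    have hdiff : (fun x' => ((0 : X), ρ x')) =o[𝓝 x] γ := (isLittleO_zero _ _).prod_left hργ
    have htangent : (γ - fun x' => ((0 : X), ρ x')) =
        fun x' => (ContinuousLinearMap.id 𝕜 X).prod K (x' - x) := by
      ext x' <;> simp [γ, ρ]
    exact (hdiff.right_isBigO_sub.congr_right (congrFun htangent)).trans
      (ContinuousLinearMap.isBigO_sub _ _ _)
  exact .of_isLittleO (hργ.trans_isBigO hγ)

theorem hasFDerivAt_of_partial_of_apply_graph_eq [IsRCLikeNormedField 𝕜] {f : X → Y → Z}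
    {f₁ : X → Y → X →L[𝕜] Z} {f₂ : X → Y → Y →L[𝕜] Z} {U : Set X} {V : Set Y} {z : Z}
    (hU : IsOpen U) (hV : IsOpen V)
    (df₁ : ∀ x ∈ U, ∀ y ∈ V, HasFDerivAt (f · y) (f₁ x y) x)
    (df₂ : ∀ x ∈ U, ∀ y ∈ V, HasFDerivAt (f x) (f₂ x y) y)
    (cf₁ : ContinuousOn ↿f₁ (U ×ˢ V)) (cf₂ : ContinuousOn ↿f₂ (U ×ˢ V))
    (hη : ContinuousOn η U) (hroot : ∀ x ∈ U, η x ∈ V ∧ f x (η x) = z) {x : X} (hx : x ∈ U)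
    (hinv : (f₂ x (η x)).IsInvertible) :
    HasFDerivAt η (-(f₂ x (η x)).inverse ∘L f₁ x (η x)) x := by
  have hUx : U ∈ 𝓝 x := hU.mem_nhds hx
  have hUV : U ×ˢ V ∈ 𝓝 (x, η x) := prod_mem_nhds hUx (hV.mem_nhds (hroot x hx).1)
  have hf : HasStrictFDerivAt ↿f ((f₁ x (η x)).coprod (f₂ x (η x))) (x, η x) :=
    hasStrictFDerivAt_uncurry_coprod
      (by filter_upwards [hUV] with v hv using df₁ _ hv.1 _ hv.2)
      (by filter_upwards [hUV] with v hv using df₂ _ hv.1 _ hv.2)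
      (cf₁.continuousAt hUV) (cf₂.continuousAt hUV)
  refine hasFDerivAt_of_eventually_apply_graph_eq hf.hasFDerivAt hinv (hη.continuousAt hUx) ?_
  filter_upwards [hUx] with x' hx'
  exact (hroot x' hx').2.trans (hroot x hx).2.symm

end ImplicitDerivative

theorem stmt_10_general {𝕜 P X Y Z : Type*} [NontriviallyNormedField 𝕜] [IsRCLikeNormedField 𝕜]
    [TopologicalSpace P] [NormedAddCommGroup X] [NormedSpace 𝕜 X]
    [NormedAddCommGroup Y] [NormedSpace 𝕜 Y] [CompleteSpace Y]
    [NormedAddCommGroup Z] [NormedSpace 𝕜 Z]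
    {T : Set P} {U : Set X} {V : Set Y} (hU : IsOpen U) (hV : IsOpen V) {F : P → X → Y → Z}
    {Fx : P → X → Y → X →L[𝕜] Z} {Fy : P → X → Y → Y →L[𝕜] Z}
    (hF : ContinuousOn ↿F (T ×ˢ U ×ˢ V))
    (hFx : ∀ t ∈ T, ∀ x ∈ U, ∀ y ∈ V, HasFDerivAt (F t · y) (Fx t x y) x)
    (hFy : ∀ t ∈ T, ∀ x ∈ U, ∀ y ∈ V, HasFDerivAt (F t x) (Fy t x y) y)
    (hFxc : ContinuousOn ↿Fx (T ×ˢ U ×ˢ V)) (hFyc : ContinuousOn ↿Fy (T ×ˢ U ×ˢ V))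
    (hexun : ∀ t ∈ T, ∀ x ∈ U, ∃! y, y ∈ V ∧ F t x y = 0)
    (hinv : ∀ t ∈ T, ∀ x ∈ U, ∀ y ∈ V, F t x y = 0 → (Fy t x y).IsInvertible) :
    ∃ η : P → X → Y,
      (∀ t ∈ T, ∀ x ∈ U, η t x ∈ V ∧ F t x (η t x) = 0) ∧
      (∀ t ∈ T, ∀ x ∈ U, ∀ y ∈ V, F t x y = 0 → y = η t x) ∧
      ContinuousOn ↿η (T ×ˢ U) ∧
      ∃ Dη : P → X → X →L[𝕜] Y,
        (∀ t ∈ T, ∀ x ∈ U, HasFDerivAt (η t) (Dη t x) x) ∧ ContinuousOn ↿Dη (T ×ˢ U) := by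
  choose! η hroot hunique using hexun
  replace hunique : ∀ t ∈ T, ∀ x ∈ U, ∀ y ∈ V, F t x y = 0 → y = η t x :=
    fun t ht x hx y hy h => hunique t ht x hx y ⟨hy, h⟩
  have hinvη : ∀ p ∈ T ×ˢ U, (Fy p.1 p.2 (η p.1 p.2)).IsInvertible := fun p hp =>
    hinv p.1 hp.1 p.2 hp.2 _ (hroot p.1 hp.1 p.2 hp.2).1 (hroot p.1 hp.1 p.2 hp.2).2
  have hF_slice : ∀ y ∈ V, ContinuousOn (fun p : P × X => F p.1 p.2 y) (T ×ˢ U) := fun y hy =>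
    hF.comp (f := fun p : P × X => (p.1, p.2, y)) (by fun_prop) fun p hp => ⟨hp.1, hp.2, hy⟩
  have hFy_assoc : ContinuousOn (fun q : (P × X) × Y => Fy q.1.1 q.1.2 q.2) ((T ×ˢ U) ×ˢ V) :=
    hFyc.comp (f := fun q : (P × X) × Y => (q.1.1, q.1.2, q.2)) (by fun_prop)
      fun q hq => ⟨hq.1.1, hq.1.2, hq.2⟩
  have hη : ContinuousOn (fun p : P × X => η p.1 p.2) (T ×ˢ U) :=
    continuousOn_of_unique_apply_eq hV hF_slice (fun p hp => hFy p.1 hp.1 p.2 hp.2) hFy_assoc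
      (fun p hp => hroot p.1 hp.1 p.2 hp.2) (fun p hp => hunique p.1 hp.1 p.2 hp.2) hinvη
  have hgraph : ContinuousOn (fun p : P × X => (p.1, p.2, η p.1 p.2)) (T ×ˢ U) :=
    continuousOn_fst.prodMk (continuousOn_snd.prodMk hη)
  have hmaps : MapsTo (fun p : P × X => (p.1, p.2, η p.1 p.2)) (T ×ˢ U) (T ×ˢ U ×ˢ V) :=
    fun p hp => ⟨hp.1, hp.2, (hroot p.1 hp.1 p.2 hp.2).1⟩
  refine ⟨η, hroot, hunique, hη, fun t x => -(Fy t x (η t x)).inverse ∘L Fx t x (η t x),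
    fun t ht x hx => ?_, ?_⟩
  · have hslice : ContinuousOn (fun v : X × Y => (t, v)) (U ×ˢ V) := by fun_prop
    exact hasFDerivAt_of_partial_of_apply_graph_eq hU hV (hFx t ht) (hFy t ht)
      (hFxc.comp hslice fun v hv => ⟨ht, hv⟩) (hFyc.comp hslice fun v hv => ⟨ht, hv⟩)
      (hη.comp (f := fun x => (t, x)) (by fun_prop) fun x hx => ⟨ht, hx⟩) (hroot t ht) hx
      (hinvη (t, x) ⟨ht, hx⟩)
  · exact (continuousOn_inverse_of_isInvertible (hFyc.comp hgraph hmaps)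
      hinvη).neg.clm_comp (hFxc.comp hgraph hmaps)

/-- Nonlocal C¹ implicit function theorem: if `F ∈ C(T × D_X × D_Y, Z)` has continuous
partial Fréchet derivatives in `x` and `y`, for each `(t,x) ∈ T × M_X` there is a unique
`y ∈ M_Y` with `F(t,x,y) = 0`, and at each solution point `∂_y F` has a bounded inverse,
then `F(t,x,y) = 0` has a unique solution `y = η(t,x)` on `T × M_X`; the function `η` is
continuous and continuously differentiable with respect to `x`. -/
theorem stmt_10
    {X Y Z : Type*} [NormedAddCommGroup X] [NormedSpace ℝ X] [CompleteSpace X]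
    [NormedAddCommGroup Y] [NormedSpace ℝ Y] [CompleteSpace Y]
    [NormedAddCommGroup Z] [NormedSpace ℝ Z] [CompleteSpace Z]
    (T : Set ℝ) (hT : T.OrdConnected)
    (DX : Set X) (DY : Set Y) (hDX : IsOpen DX) (hDY : IsOpen DY)
    (MX : Set X) (MY : Set Y) (hMXopen : IsOpen MX) (hMYopen : IsOpen MY)
    (hMX : MX ⊆ DX) (hMY : MY ⊆ DY)
    (F : ℝ → X → Y → Z)
    (hFcont : ContinuousOn (fun p : ℝ × X × Y => F p.1 p.2.1 p.2.2) (T ×ˢ DX ×ˢ DY))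
    -- continuous partial derivatives of `F` in `x` and `y` on `T × D_X × D_Y`
    (Fx : ℝ → X → Y → (X →L[ℝ] Z)) (Fy : ℝ → X → Y → (Y →L[ℝ] Z))
    (hFx : ∀ t ∈ T, ∀ x ∈ DX, ∀ y ∈ DY, HasFDerivAt (fun x'' => F t x'' y) (Fx t x y) x)
    (hFy : ∀ t ∈ T, ∀ x ∈ DX, ∀ y ∈ DY, HasFDerivAt (fun y'' => F t x y'') (Fy t x y) y)
    (hFxcont : ContinuousOn (fun p : ℝ × X × Y => Fx p.1 p.2.1 p.2.2) (T ×ˢ DX ×ˢ DY))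
    (hFycont : ContinuousOn (fun p : ℝ × X × Y => Fy p.1 p.2.1 p.2.2) (T ×ˢ DX ×ˢ DY))
    -- condition 1: existence and uniqueness of `y ∈ M_Y` for each `(t, x) ∈ T × M_X`
    (hexun : ∀ t ∈ T, ∀ x ∈ MX, ∃! y, y ∈ MY ∧ F t x y = 0)
    -- condition 2: at each solution point, `∂_y F` has a bounded inverse
    (hinv : ∀ t ∈ T, ∀ x ∈ MX, ∀ y ∈ MY, F t x y = 0 →
        ∃ Winv : Z →L[ℝ] Y, (∀ v, Winv (Fy t x y v) = v) ∧ (∀ z, Fy t x y (Winv z) = z)) :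
    ∃ η : ℝ → X → Y,
      (∀ t ∈ T, ∀ x ∈ MX, η t x ∈ MY ∧ F t x (η t x) = 0) ∧
      (∀ t ∈ T, ∀ x ∈ MX, ∀ y ∈ MY, F t x y = 0 → y = η t x) ∧
      ContinuousOn (fun p : ℝ × X => η p.1 p.2) (T ×ˢ MX) ∧
      -- `η` is continuously differentiable with respect to `x` on `T × M_X`
      ∃ Dη : ℝ → X → (X →L[ℝ] Y),
        (∀ t ∈ T, ∀ x ∈ MX, HasFDerivAt (fun x'' => η t x'') (Dη t x) x) ∧
        (∀ t ∈ T, ContinuousOn (Dη t) MX) := by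
  have hM : T ×ˢ MX ×ˢ MY ⊆ T ×ˢ DX ×ˢ DY := prod_mono_right (prod_mono hMX hMY)
  obtain ⟨η, hroot, hunique, hη, Dη, hderiv, hDη⟩ := stmt_10_general hMXopen hMYopen
    (hFcont.mono hM) (fun t ht x hx y hy => hFx t ht x (hMX hx) y (hMY hy))
    (fun t ht x hx y hy => hFy t ht x (hMX hx) y (hMY hy)) (hFxcont.mono hM) (hFycont.mono hM)
    hexun fun t ht x hx y hy h =>
      let ⟨_, hleft, hright⟩ := hinv t ht x hx y hy h
      .of_inverse (ContinuousLinearMap.ext hright) (ContinuousLinearMap.ext hleft)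
  exact ⟨η, hroot, hunique, hη, Dη, hderiv, fun t ht =>
    hDη.comp (f := fun x => (t, x)) (by fun_prop) fun x hx => ⟨ht, hx⟩⟩
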